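/- Let (T, Λ) be a cookie cutter system, ψ : Λ → ℝ Hölder continuous, μ a normalized Gibbs measure for ψ, α ≥ 0, a, b > 0, ξ ∈ ℝ, and fix y ∈ Λ. Then there exist constants E > 0 and c ≤ d (depending only on a, b, α, ξ, the Gibbs constants and the Hölder constants of ψ and φ) such that for every real σ and every n ≥ 1: Σ_{i : a|I_n^i|^α ≤ μ(I_n^i) ≤ b|I_n^i|^α} |I_n^i|^σ ≤ e^{|K_φ(σ−ξα)|} · E^{|ξ|} · Σ_{x : Tⁿ(x) = y, ψⁿ(x) − αφⁿ(x) ∈ [c,d]} e^{σφⁿ(x) + ξ(ψⁿ(x) − αφⁿ(x))}, where K_φ is a constant with |φⁿ(x) − φⁿ(y)| ≤ K_φ for all n and all x, y in a common n-th level basic set. -/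

import Mathlib

/-!
The map `Tⁿ` restricts to a bijection from every basic set `I` of level `n ≥ 1` onto `[0,1]`:
on a connected subset of `T^{-n}([0,1])` each iterate stays inside a single `I_j`, so `Tⁿ` is
injective there (`injOn_iterate`), and pulling `[0,1]` back through the monotone branches gives
a compact connected piece that already maps onto `[0,1]` (`exists_full_branch`); by injectivity
that piece is the whole component. Consequently `I` contains a point `x` with `Tⁿ x = y`, and the
mean value theorem gives `z ∈ I` with `|I| = exp (φⁿ z)` (`IsBasic.exists_geometry`).

Put `w = ψⁿ x - α φⁿ x`. As `|φⁿ z - φⁿ x| ≤ K_φ`, the Gibbs bounds turn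
`a |I|^α ≤ μ I ≤ b |I|^α` into `log (a/D) - α K_φ ≤ w ≤ log (b/C) + α K_φ`, which is the window
`[c, d]`. Then
`σ φⁿ z = σ φⁿ x + ξ w + (σ - ξ α)(φⁿ z - φⁿ x) + ξ (α (φⁿ z - φⁿ x) - w)`,
where the last two terms are at most `|K_φ (σ - ξ α)|` and `|ξ| log E`. Distinct
components are disjoint, so `I ↦ x` is injective and the terms can be summed; the set of preimages
is finite, so both sums are finite.
-/

open MeasureTheory Set

/-- A cookie cutter system: `k ≥ 2` pairwise disjoint closed intervals
`[u j, v j] ⊆ [0,1]`, each mapped bijectively onto `[0,1]` by `T`, with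
`T` differentiable with `ε`-Hölder derivative `T'` satisfying `|T'| ≥ lam > 1`. -/
structure CookieCutter where
  k : ℕ
  two_le_k : 2 ≤ k
  u : Fin k → ℝ
  v : Fin k → ℝ
  T : ℝ → ℝ
  T' : ℝ → ℝ
  lam : ℝ
  eps : ℝ
  Ceps : ℝ
  nondeg : ∀ j, u j < v j
  subset_unit : ∀ j, Icc (u j) (v j) ⊆ Icc (0:ℝ) 1
  pair_disj : Pairwise fun i j => Disjoint (Icc (u i) (v i)) (Icc (u j) (v j))
  bijOn : ∀ j, BijOn T (Icc (u j) (v j)) (Icc (0:ℝ) 1)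
  hasDeriv : ∀ x ∈ ⋃ j, Icc (u j) (v j),
    HasDerivWithinAt T (T' x) (⋃ j, Icc (u j) (v j)) x
  eps_pos : 0 < eps
  Ceps_nonneg : 0 ≤ Ceps
  holder : ∀ x ∈ ⋃ j, Icc (u j) (v j), ∀ y ∈ ⋃ j, Icc (u j) (v j),
    |T' x - T' y| ≤ Ceps * |x - y| ^ eps
  one_lt_lam : 1 < lam
  expanding : ∀ x ∈ ⋃ j, Icc (u j) (v j), lam ≤ |T' x|

/-- The length of a (bounded) interval `I ⊆ ℝ`. -/
noncomputable def setLen (I : Set ℝ) : ℝ := sSup I - sInf I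

namespace CookieCutter

variable (S : CookieCutter)

/-- The domain `I_1 ∪ ⋯ ∪ I_k` of the cookie cutter map. -/
def domain : Set ℝ := ⋃ j, Icc (S.u j) (S.v j)

/-- The set `T^{-n}([0,1])`: points whose first `n` iterates stay in the domain. -/
def level (n : ℕ) : Set ℝ := {x | ∀ m < n, S.T^[m] x ∈ S.domain}

/-- `I` is an `n`-th level basic set, i.e. a connected component of `T^{-n}([0,1])`. -/
def IsBasic (n : ℕ) (I : Set ℝ) : Prop :=
  ∃ x ∈ S.level n, I = connectedComponentIn (S.level n) x

/-- The repeller `Λ = ⋂_{n ≥ 0} T^{-n}([0,1])`. -/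
def repeller : Set ℝ := {x | ∀ n, S.T^[n] x ∈ S.domain}

/-- The function `φ = - log |T'|`. -/
noncomputable def phi (x : ℝ) : ℝ := - Real.log |S.T' x|

/-- The Birkhoff sum `fⁿ(x) = Σ_{j<n} f(T^j x)`. -/
noncomputable def birkhoff (f : ℝ → ℝ) (n : ℕ) (x : ℝ) : ℝ :=
  ∑ j ∈ Finset.range n, f (S.T^[j] x)

/-- `f` is Hölder continuous on the set `A`. -/
def IsHolderOn (f : ℝ → ℝ) (A : Set ℝ) : Prop :=
  ∃ β C : ℝ, 0 < β ∧ β ≤ 1 ∧ 0 ≤ C ∧ ∀ x ∈ A, ∀ y ∈ A, |f x - f y| ≤ C * |x - y| ^ β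

/-- `μ` is a normalized Gibbs measure for the potential `ψ`: a Borel probability
measure on the repeller with `C ≤ μ(I_n^i)/e^{ψⁿ(x)} ≤ D` for every basic set. -/
def IsGibbs (ψ : ℝ → ℝ) (μ : Measure ℝ) : Prop :=
  IsProbabilityMeasure μ ∧ μ S.repellerᶜ = 0 ∧
    ∃ C D : ℝ, 0 < C ∧ 0 < D ∧
      ∀ n, 1 ≤ n → ∀ I, S.IsBasic n I → ∀ x ∈ I ∩ S.repeller,
        C * Real.exp (S.birkhoff ψ n x) ≤ (μ I).toReal ∧
          (μ I).toReal ≤ D * Real.exp (S.birkhoff ψ n x)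

/-- `ν` is a `T`-invariant Borel probability measure on the repeller. -/
def IsInvariantProb (ν : Measure ℝ) : Prop :=
  IsProbabilityMeasure ν ∧ ν S.repellerᶜ = 0 ∧
    ∀ A, MeasurableSet A → ν (S.T ⁻¹' A) = ν A

end CookieCutter

namespace CookieCutter

variable (S : CookieCutter)

/-! ### Iterates on the level sets -/

lemma domain_subset_unit : S.domain ⊆ Icc 0 1 :=
  iUnion_subset S.subset_unit

lemma mapsTo_domain : MapsTo S.T S.domain (Icc 0 1) := by
  intro x hx
  obtain ⟨j, hj⟩ := mem_iUnion.1 hx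
  exact (S.bijOn j).mapsTo hj

lemma level_mono {m n : ℕ} (h : m ≤ n) : S.level n ⊆ S.level m :=
  fun _ hx i hi => hx i (hi.trans_le h)

lemma mem_level_succ {n : ℕ} {x : ℝ} :
    x ∈ S.level (n + 1) ↔ x ∈ S.domain ∧ S.T x ∈ S.level n := by
  constructor
  · intro h
    exact ⟨h 0 (Nat.succ_pos n), fun m hm => h (m + 1) (Nat.succ_lt_succ hm)⟩
  · rintro ⟨h0, h1⟩ m hm
    cases m with
    | zero => exact h0
    | succ m => exact h1 m (Nat.lt_of_succ_lt_succ hm)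

lemma level_subset_unit {n : ℕ} (hn : 1 ≤ n) : S.level n ⊆ Icc 0 1 :=
  fun _ hx => S.domain_subset_unit (hx 0 hn)

lemma mapsTo_level {n : ℕ} (hn : 1 ≤ n) : MapsTo S.T^[n] (S.level n) (Icc 0 1) := by
  obtain ⟨m, rfl⟩ := Nat.exists_eq_add_of_le' hn
  intro x hx
  rw [Function.iterate_succ_apply']
  exact S.mapsTo_domain (hx m (Nat.lt_succ_self m))

lemma continuousOn_T : ContinuousOn S.T S.domain :=
  fun x hx => (S.hasDeriv x hx).continuousWithinAt

lemma continuousOn_T_Icc (j : Fin S.k) : ContinuousOn S.T (Icc (S.u j) (S.v j)) :=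
  S.continuousOn_T.mono (subset_iUnion (fun j => Icc (S.u j) (S.v j)) j)

lemma hasDerivWithinAt_iterate (n : ℕ) {x : ℝ} (hx : x ∈ S.level n) :
    HasDerivWithinAt S.T^[n] (∏ j ∈ Finset.range n, S.T' (S.T^[j] x)) (S.level n) x := by
  induction n with
  | zero => simpa using hasDerivWithinAt_id x _
  | succ n ih =>
    rw [Function.iterate_succ', Finset.prod_range_succ, mul_comm]
    have h1 := (ih (S.level_mono n.le_succ hx)).mono (S.level_mono n.le_succ)
    exact (S.hasDeriv _ (hx n n.lt_succ_self)).comp x h1 fun z hz => hz n n.lt_succ_self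

lemma continuousOn_iterate (n : ℕ) : ContinuousOn S.T^[n] (S.level n) :=
  fun _ hx => (S.hasDerivWithinAt_iterate n hx).continuousWithinAt

lemma abs_prod_deriv (n : ℕ) {x : ℝ} (hx : x ∈ S.level n) :
    |∏ j ∈ Finset.range n, S.T' (S.T^[j] x)| = Real.exp (-S.birkhoff S.phi n x) := by
  rw [Finset.abs_prod, birkhoff, ← Finset.sum_neg_distrib, Real.exp_sum]
  refine Finset.prod_congr rfl fun j hj => ?_
  have h := S.expanding _ (hx j (Finset.mem_range.1 hj))
  have h1 := S.one_lt_lam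
  rw [phi, neg_neg, Real.exp_log (by linarith)]

lemma finite_preimages (n : ℕ) (y : ℝ) : {x | x ∈ S.level n ∧ S.T^[n] x = y}.Finite := by
  induction n with
  | zero => exact (finite_singleton y).subset fun x hx => hx.2
  | succ n ih =>
    refine (finite_iUnion fun j : Fin S.k =>
      Finite.of_finite_image (s := Icc (S.u j) (S.v j) ∩
        S.T ⁻¹' {x | x ∈ S.level n ∧ S.T^[n] x = y}) (ih.subset ?_)
        ((S.bijOn j).injOn.mono inter_subset_left)).subset ?_
    · rintro _ ⟨x, hx, rfl⟩
      exact hx.2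
    · rintro x ⟨hx, hxy⟩
      obtain ⟨h0, h1⟩ := S.mem_level_succ.1 hx
      obtain ⟨j, hj⟩ := mem_iUnion.1 h0
      exact mem_iUnion.2 ⟨j, hj, h1, hxy⟩

/-! ### Basic sets -/

lemma exists_subset_Icc {A : Set ℝ} (hA : IsPreconnected A) (hAd : A ⊆ S.domain)
    (hne : A.Nonempty) : ∃ j, A ⊆ Icc (S.u j) (S.v j) := by
  obtain ⟨x, hx⟩ := hne
  obtain ⟨j, hj⟩ := mem_iUnion.1 (hAd hx)
  refine ⟨j, ?_⟩
  have hdisj : Disjoint (Icc (S.u j) (S.v j)) (⋃ i : {i // i ≠ j}, Icc (S.u i) (S.v i)) :=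
    disjoint_iUnion_right.2 fun i => S.pair_disj i.2.symm
  have hcov : A ⊆ Icc (S.u j) (S.v j) ∪ ⋃ i : {i // i ≠ j}, Icc (S.u i) (S.v i) := by
    intro z hz
    obtain ⟨i, hi⟩ := mem_iUnion.1 (hAd hz)
    by_cases hij : i = j
    · exact Or.inl (hij ▸ hi)
    · exact Or.inr (mem_iUnion.2 ⟨⟨i, hij⟩, hi⟩)
  rcases isPreconnected_iff_subset_of_disjoint_closed.1 hA _ _ isClosed_Icc
    (isClosed_iUnion_of_finite fun i : {i // i ≠ j} => isClosed_Icc) hcov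
    (by rw [hdisj.inter_eq, inter_empty]) with h | h
  · exact h
  · exact (disjoint_left.1 hdisj hj (h hx)).elim

lemma injOn_iterate (n : ℕ) {A : Set ℝ} (hA : IsPreconnected A) (hAl : A ⊆ S.level n) :
    InjOn S.T^[n] A := by
  induction n with
  | zero => exact fun _ _ _ _ h => h
  | succ n ih =>
    rcases A.eq_empty_or_nonempty with rfl | hne
    · exact injOn_empty _
    have hAn := hAl.trans (S.level_mono n.le_succ)
    obtain ⟨j, hj⟩ := S.exists_subset_Icc
      (hA.image _ ((S.continuousOn_iterate n).mono hAn))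
      (by rintro _ ⟨z, hz, rfl⟩; exact hAl hz n n.lt_succ_self) (hne.image _)
    rw [Function.iterate_succ']
    exact (S.bijOn j).injOn.comp (ih hAn) fun z hz => hj (mem_image_of_mem _ hz)

/-- Each point of `T^{-n}([0,1])` lies in a compact connected set that `Tⁿ` maps onto `[0,1]`.
The condition `x ∈ [0,1]` matters only for `n = 0`, where `level 0 = univ`. -/
lemma exists_full_branch (n : ℕ) {x : ℝ} (hx : x ∈ S.level n) (hx01 : x ∈ Icc (0 : ℝ) 1) :
    ∃ J : Set ℝ, x ∈ J ∧ J ⊆ S.level n ∧ J ⊆ Icc 0 1 ∧ IsCompact J ∧ J.OrdConnected ∧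
      S.T^[n] '' J = Icc 0 1 := by
  induction n generalizing x with
  | zero =>
    exact ⟨Icc 0 1, hx01, fun _ _ m hm => absurd hm (Nat.not_lt_zero m), subset_rfl,
      isCompact_Icc, ordConnected_Icc, by simp⟩
  | succ n ih =>
    obtain ⟨h0, h1⟩ := S.mem_level_succ.1 hx
    obtain ⟨J, hxJ, hJl, hJ01, hJc, hJo, hJi⟩ := ih h1 (S.mapsTo_domain h0)
    obtain ⟨j, hj⟩ := mem_iUnion.1 h0
    have hTc := S.continuousOn_T_Icc j
    refine ⟨Icc (S.u j) (S.v j) ∩ S.T ⁻¹' J, ⟨hj, hxJ⟩, ?_, ?_, ?_, ?_, ?_⟩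
    · exact fun z hz => S.mem_level_succ.2 ⟨mem_iUnion.2 ⟨j, hz.1⟩, hJl hz.2⟩
    · exact inter_subset_left.trans (S.subset_unit j)
    · exact isCompact_Icc.of_isClosed_subset
        (hTc.preimage_isClosed_of_isClosed isClosed_Icc hJc.isClosed) inter_subset_left
    · refine ⟨fun p hp q hq r hr => ?_⟩
      have hrI : r ∈ Icc (S.u j) (S.v j) := ⟨hp.1.1.trans hr.1, hr.2.trans hq.1.2⟩
      refine ⟨hrI, ?_⟩
      rcases hTc.strictMonoOn_of_injOn_Icc' (S.nondeg j).le (S.bijOn j).injOn with hm | hm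
      · exact hJo.out hp.2 hq.2
          ⟨hm.monotoneOn hp.1 hrI hr.1, hm.monotoneOn hrI hq.1 hr.2⟩
      · exact hJo.out hq.2 hp.2
          ⟨hm.antitoneOn hrI hq.1 hr.2, hm.antitoneOn hp.1 hrI hr.1⟩
    · rw [Function.iterate_succ, image_comp, image_inter_preimage, (S.bijOn j).image_eq,
        inter_eq_right.2 hJ01, hJi]

/-- A basic set of level `n ≥ 1` contains an `n`-th preimage of each point of `[0,1]`, and by the
mean value theorem its length is the value of `exp φⁿ` at one of its points. -/
lemma IsBasic.exists_geometry {n : ℕ} (hn : 1 ≤ n) {I : Set ℝ} (hI : S.IsBasic n I) :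
    I ⊆ S.level n ∧ (∀ y ∈ Icc (0 : ℝ) 1, ∃ x ∈ I, S.T^[n] x = y) ∧
      ∃ z ∈ I, setLen I = Real.exp (S.birkhoff S.phi n z) := by
  obtain ⟨x, hx, rfl⟩ := hI
  set I := connectedComponentIn (S.level n) x with hIdef
  have hIl : I ⊆ S.level n := connectedComponentIn_subset _ _
  obtain ⟨J, hxJ, hJl, -, hJc, hJo, hJi⟩ :=
    S.exists_full_branch n hx (S.level_subset_unit hn hx)
  have hinj : InjOn S.T^[n] I := S.injOn_iterate n isPreconnected_connectedComponentIn hIl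
  have hJI : J ⊆ I := hJo.isPreconnected.subset_connectedComponentIn hxJ hJl
  have hIJ : I = J := by
    refine Subset.antisymm (fun z hz => ?_) hJI
    have hz' : S.T^[n] z ∈ S.T^[n] '' J := hJi ▸ S.mapsTo_level hn (hIl hz)
    obtain ⟨w, hw, hwz⟩ := hz'
    exact hinj (hJI hw) hz hwz ▸ hw
  clear_value I
  subst hIJ
  have hsurj : ∀ y ∈ Icc (0 : ℝ) 1, ∃ x ∈ I, S.T^[n] x = y := fun y hy => by
    rw [← hJi] at hy; exact hy
  refine ⟨hIl, hsurj, ?_⟩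
  have hIcc := eq_Icc_of_connected_compact ⟨⟨x, hxJ⟩, hJo.isPreconnected⟩ hJc
  unfold setLen
  generalize sInf I = p at *
  generalize sSup I = q at *
  subst hIcc
  have hpq : p ≤ q := hxJ.1.trans hxJ.2
  have hp : p ∈ Icc p q := left_mem_Icc.2 hpq
  have hq : q ∈ Icc p q := right_mem_Icc.2 hpq
  have hcont : ContinuousOn S.T^[n] (Icc p q) := (S.continuousOn_iterate n).mono hIl
  obtain ⟨r0, hr0, h0⟩ := hsurj 0 (by simp)
  obtain ⟨r1, hr1, h1⟩ := hsurj 1 (by simp)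
  have hp01 := S.mapsTo_level hn (hIl hp)
  have hq01 := S.mapsTo_level hn (hIl hq)
  have hend : |S.T^[n] q - S.T^[n] p| = 1 := by
    rcases hcont.strictMonoOn_of_injOn_Icc' hpq hinj with hm | hm
    · have e0 : S.T^[n] p = 0 :=
        le_antisymm (h0 ▸ hm.monotoneOn hp hr0 hr0.1) hp01.1
      have e1 : S.T^[n] q = 1 :=
        le_antisymm hq01.2 (h1 ▸ hm.monotoneOn hr1 hq hr1.2)
      simp [e0, e1]
    · have e0 : S.T^[n] q = 0 :=
        le_antisymm (h0 ▸ hm.antitoneOn hr0 hq hr0.2) hq01.1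
      have e1 : S.T^[n] p = 1 :=
        le_antisymm hp01.2 (h1 ▸ hm.antitoneOn hp hr1 hr1.1)
      simp [e0, e1]
  have hlt : p < q := by
    refine lt_of_le_of_ne hpq fun h => ?_
    simp [h] at hend
  obtain ⟨z, hz, hslope⟩ := exists_hasDerivAt_eq_slope S.T^[n]
    (fun z => ∏ j ∈ Finset.range n, S.T' (S.T^[j] z)) hlt hcont fun z hz =>
      ((S.hasDerivWithinAt_iterate n (hIl (Ioo_subset_Icc_self hz))).mono hIl).hasDerivAt
        (Icc_mem_nhds hz.1 hz.2)
  have hzI := Ioo_subset_Icc_self hz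
  refine ⟨z, hzI, ?_⟩
  have habs := S.abs_prod_deriv n (hIl hzI)
  rw [hslope, abs_div, hend, abs_of_pos (sub_pos.2 hlt), Real.exp_neg, one_div] at habs
  exact inv_injective habs

lemma IsBasic.eq_of_mem {n : ℕ} {I J : Set ℝ} (hI : S.IsBasic n I) (hJ : S.IsBasic n J) {x : ℝ}
    (hxI : x ∈ I) (hxJ : x ∈ J) : I = J := by
  obtain ⟨_, -, rfl⟩ := hI
  obtain ⟨_, -, rfl⟩ := hJ
  rw [connectedComponentIn_eq hxI, connectedComponentIn_eq hxJ]

lemma birkhoff_sub_mul (ψ : ℝ → ℝ) (α : ℝ) (n : ℕ) (x : ℝ) :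
    S.birkhoff (fun z => ψ z - α * S.phi z) n x =
      S.birkhoff ψ n x - α * S.birkhoff S.phi n x := by
  simp [birkhoff, Finset.sum_sub_distrib, Finset.mul_sum]

lemma mem_repeller_of_iterate {n : ℕ} {x : ℝ} (hx : x ∈ S.level n)
    (hy : S.T^[n] x ∈ S.repeller) : x ∈ S.repeller := by
  intro m
  rcases lt_or_ge m n with h | h
  · exact hx m h
  · obtain ⟨r, rfl⟩ := Nat.exists_eq_add_of_le' h
    rw [Function.iterate_add_apply]
    exact hy r

end CookieCutter

/-- Upper bound for the multifractal zeta sum at level `n` by a weighted sum over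
`n`-th preimages of a point `y` whose Birkhoff sums `ψⁿ - αφⁿ` lie in a window
`[c,d]` (Proposition: `ζ_α^μ(σ) ≤ e^{|K_φ(σ-ξα)|} E^{|ξ|} ζ_{α,χ}(σ,ξ)`). -/
theorem zeta_upper_bound_by_preimage_sum (S : CookieCutter) (ψ : ℝ → ℝ)
    (hψ : CookieCutter.IsHolderOn ψ S.repeller)
    (μ : Measure ℝ) (hμ : S.IsGibbs ψ μ) (α : ℝ) (hα : 0 ≤ α)
    (a b : ℝ) (ha : 0 < a) (hb : 0 < b) (ξ : ℝ) (y : ℝ) (hy : y ∈ S.repeller)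
    (Kφ : ℝ) (hKφ : ∀ n, 1 ≤ n → ∀ I, S.IsBasic n I → ∀ x ∈ I, ∀ z ∈ I,
      |S.birkhoff S.phi n x - S.birkhoff S.phi n z| ≤ Kφ) :
    ∃ E : ℝ, 0 < E ∧ ∃ c d : ℝ, c ≤ d ∧ ∀ σ : ℝ, ∀ n : ℕ, 1 ≤ n →
      (∑' I : {I : Set ℝ // S.IsBasic n I ∧ a * setLen I ^ α ≤ (μ I).toReal ∧
          (μ I).toReal ≤ b * setLen I ^ α}, setLen I.1 ^ σ) ≤
        Real.exp |Kφ * (σ - ξ * α)| * E ^ |ξ| *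
          ∑' x : {x : ℝ // x ∈ S.level n ∧ S.T^[n] x = y ∧
              S.birkhoff (fun z => ψ z - α * S.phi z) n x ∈ Set.Icc c d},
            Real.exp (σ * S.birkhoff S.phi n x.1 +
              ξ * S.birkhoff (fun z => ψ z - α * S.phi z) n x.1) := by
  obtain ⟨-, -, C, D, hC, hD, hG⟩ := hμ
  set c := Real.log a - Real.log D - α * Kφ with hc
  -- The maximum only ensures `c ≤ d`, which could fail if no basic set satisfied the constraint.
  set d := max c (Real.log b - Real.log C + α * Kφ) with hd
  refine ⟨Real.exp (α * Kφ + (|c| + |d|)), Real.exp_pos _, c, d, le_max_left _ _, ?_⟩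
  intro σ n hn
  -- `|I| = exp (φⁿ z)` with `z ∈ I`; comparing `z` with the preimage `x` of `y` gives the estimate.
  have key : ∀ I : {I : Set ℝ // S.IsBasic n I ∧ a * setLen I ^ α ≤ (μ I).toReal ∧
      (μ I).toReal ≤ b * setLen I ^ α}, ∃ x : {x : ℝ // x ∈ S.level n ∧ S.T^[n] x = y ∧
        S.birkhoff (fun z => ψ z - α * S.phi z) n x ∈ Set.Icc c d}, x.1 ∈ I.1 ∧
      setLen I.1 ^ σ ≤ Real.exp |Kφ * (σ - ξ * α)| * Real.exp (α * Kφ + (|c| + |d|)) ^ |ξ| *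
        Real.exp (σ * S.birkhoff S.phi n x.1 +
          ξ * S.birkhoff (fun z => ψ z - α * S.phi z) n x.1) := by
    rintro ⟨I, hI, hIa, hIb⟩
    obtain ⟨hIl, hsurj, z, hz, hlen⟩ := CookieCutter.IsBasic.exists_geometry S hn hI
    obtain ⟨x, hxI, hxy⟩ := hsurj y (S.domain_subset_unit (hy 0))
    have hxR : x ∈ S.repeller := S.mem_repeller_of_iterate (hIl hxI) (hxy ▸ hy)
    obtain ⟨hG1, hG2⟩ := hG n hn I hI x ⟨hxI, hxR⟩
    have hδ := hKφ n hn I hI z hz x hxI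
    have hbirk := S.birkhoff_sub_mul ψ α n x
    rw [hlen, ← Real.exp_mul] at hIa hIb
    generalize S.birkhoff S.phi n z = pz at *
    generalize hpx : S.birkhoff S.phi n x = px at *
    generalize hsx : S.birkhoff ψ n x = sx at *
    have hlow : Real.log a + pz * α ≤ Real.log D + sx := by
      have h := Real.log_le_log (by positivity) (hIa.trans hG2)
      rwa [Real.log_mul ha.ne' (Real.exp_ne_zero _), Real.log_mul hD.ne' (Real.exp_ne_zero _),
        Real.log_exp, Real.log_exp] at h
    have hupp : Real.log C + sx ≤ Real.log b + pz * α := by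
      have h := Real.log_le_log (by positivity) (hG1.trans hIb)
      rwa [Real.log_mul hC.ne' (Real.exp_ne_zero _), Real.log_mul hb.ne' (Real.exp_ne_zero _),
        Real.log_exp, Real.log_exp] at h
    have hαδ : |α * (pz - px)| ≤ α * Kφ := by
      rw [abs_mul, abs_of_nonneg hα]
      exact mul_le_mul_of_nonneg_left hδ hα
    have hαδ' := abs_le.1 hαδ
    have hw : sx - α * px ∈ Icc c d := by
      refine ⟨by rw [hc]; linarith, le_max_of_le_right (by linarith)⟩
    refine ⟨⟨x, hIl hxI, hxy, by rw [hbirk]; exact hw⟩, hxI, ?_⟩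
    simp only [hbirk, hpx]
    rw [hlen, ← Real.exp_mul, ← Real.exp_mul, ← Real.exp_add, ← Real.exp_add, Real.exp_le_exp]
    generalize sx - α * px = w at *
    have hwabs : |w| ≤ |c| + |d| := by
      rw [abs_le]
      constructor
      · linarith [hw.1, neg_abs_le c, abs_nonneg d]
      · linarith [hw.2, le_abs_self d, abs_nonneg c]
    have e1 : (σ - ξ * α) * (pz - px) ≤ |Kφ * (σ - ξ * α)| := by
      refine (le_abs_self _).trans ?_
      rw [abs_mul, abs_mul, mul_comm]
      exact mul_le_mul_of_nonneg_right (hδ.trans (le_abs_self _)) (abs_nonneg _)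
    have e2 : ξ * (α * (pz - px) - w) ≤ (α * Kφ + (|c| + |d|)) * |ξ| := by
      refine (le_abs_self _).trans ?_
      rw [abs_mul, mul_comm]
      exact mul_le_mul_of_nonneg_right ((abs_sub _ _).trans (add_le_add hαδ hwabs)) (abs_nonneg _)
    linarith
  choose g hgI hg using key
  have hginj : Function.Injective g := fun I J h =>
    Subtype.ext (CookieCutter.IsBasic.eq_of_mem S I.2.1 J.2.1 (hgI I) (h ▸ hgI J))
  have hfin : Finite {x : ℝ // x ∈ S.level n ∧ S.T^[n] x = y ∧
      S.birkhoff (fun z => ψ z - α * S.phi z) n x ∈ Set.Icc c d} :=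
    ((S.finite_preimages n y).subset fun x hx => ⟨hx.1, hx.2.1⟩).to_subtype
  have hfin' := Finite.of_injective g hginj
  rw [← tsum_mul_left]
  exact Summable.tsum_le_tsum_of_inj g hginj (fun _ _ => by positivity) hg
    (Summable.of_finite) (Summable.of_finite)
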